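/- arXiv:1705.10239 — 2 statements merged into one kernel-verified Lean document; each statement's English description precedes it below -/
import Mathlib

section
/- Let G = (V, E) be a tree rooted at a vertex r, and for v ∈ V let D(v) denote the set of descendants of v (including v). Let u : V → ℚ≥0 be an additive set function, let q ∈ ℚ, and let v ∈ V satisfy u(D(w)) < q for every child w of v. If V admits a partition into k ≥ 2 nonempty parts, each inducing a connected subgraph of G and each of u-value at least q, then V ∖ D(v) admits a partition into k − 1 nonempty parts, each inducing a connected subgraph of G and each of u-value at least q. -/
/-!
Let `P j₀` be the part containing `v`. The only edge leaving a subtree `D(w)` joins `w` to its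
parent (`eq_root_of_adj_descendants`). Hence a part that avoids `v` and meets `D(v)` is trapped in
`D(w)` for some child `w` of `v`, and its value is below `q`; so every part other than `P j₀` lies
in `V ∖ D(v)` and `D(v) ⊆ P j₀`.

It remains to redistribute the leftover `P j₀ ∖ D(v)`. Cutting a subtree off a connected set leaves
a connected set (`connOn_diff_descendants`), because the subtree can be retracted onto the parent
of its root. Applied to `P j₀` this shows that the leftover is connected; applied to `V` it shows
that `V ∖ D(v)` is connected, so some edge joins the leftover to another part, which absorbs it.
-/

/-- The total utility of a set of items under an additive utility function `u`. -/
noncomputable def setVal {V : Type*} (u : V → ℚ) (X : Set V) : ℚ := ∑ᶠ x ∈ X, u x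

/-- A set of items induces a connected subgraph of `G`. -/
def ConnOn {V : Type*} (G : SimpleGraph V) (X : Set V) : Prop := (G.induce X).Connected

/-- A (possibly empty) bundle is connected in `G`. -/
def PreconnOn {V : Type*} (G : SimpleGraph V) (X : Set V) : Prop := (G.induce X).Preconnected

/-- An allocation is valid if every bundle is connected in `G` and bundles are
pairwise disjoint. -/
def ValidAlloc {V N : Type*} (G : SimpleGraph V) (π : N → Set V) : Prop :=
  (∀ i, PreconnOn G (π i)) ∧ ∀ i j, i ≠ j → Disjoint (π i) (π j)

/-- A partition of the whole vertex set into `n` nonempty parts, each inducing a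
connected subgraph of `G`. -/
def IsConnPartition {V : Type*} {n : ℕ} (G : SimpleGraph V) (P : Fin n → Set V) : Prop :=
  (∀ j, (P j).Nonempty) ∧ (∀ j, ConnOn G (P j)) ∧
    (∀ j k, j ≠ k → Disjoint (P j) (P k)) ∧ (⋃ j, P j) = Set.univ

/-- In a tree rooted at `r`, the descendants of `v` (including `v` itself):
those vertices `x` such that `v` lies on the unique path from `r` to `x`. -/
def descendants {V : Type*} (G : SimpleGraph V) (r v : V) : Set V :=
  {x | G.dist r x = G.dist r v + G.dist v x}

/-- In a tree rooted at `r`, `w` is a child of `v` if it is a neighbor of `v`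
that is farther from the root. -/
def IsChild {V : Type*} (G : SimpleGraph V) (r v w : V) : Prop :=
  G.Adj v w ∧ G.dist r w = G.dist r v + 1

section Helpers

variable {V : Type*} {G : SimpleGraph V}

lemma exists_adj_dist_succ (hG : G.Connected) {x y : V} (hxy : x ≠ y) :
    ∃ c, G.Adj x c ∧ G.dist x y = G.dist c y + 1 := by
  obtain ⟨p, hp⟩ := hG.exists_walk_length_eq_dist x y
  cases p with
  | nil => exact absurd rfl hxy
  | @cons _ c _ h p =>
    refine ⟨c, h, ?_⟩
    have h1 := SimpleGraph.dist_le p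
    have h2 := hG.dist_triangle (u := x) (v := c) (w := y)
    rw [SimpleGraph.dist_eq_one_iff_adj.2 h] at h2
    rw [SimpleGraph.Walk.length_cons] at hp
    omega

/-- Every vertex of a rooted tree has at most one parent. -/
lemma parent_unique (hG : G.IsTree) {r a b c : V} (hb : G.Adj a b) (hc : G.Adj a c)
    (hdb : G.dist r a = G.dist r b + 1) (hdc : G.dist r a = G.dist r c + 1) : b = c := by
  obtain ⟨p, hp⟩ := hG.connected.exists_walk_length_eq_dist r b
  obtain ⟨p', hp'⟩ := hG.connected.exists_walk_length_eq_dist r c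
  have h1 : (p.concat hb.symm).IsPath := SimpleGraph.Walk.isPath_of_length_eq_dist _ (by
    rw [SimpleGraph.Walk.length_concat]; omega)
  have h2 : (p'.concat hc.symm).IsPath := SimpleGraph.Walk.isPath_of_length_eq_dist _ (by
    rw [SimpleGraph.Walk.length_concat]; omega)
  have h := congrArg Subtype.val
    ((hG.isAcyclic.subsingleton_path r a).elim
      ⟨p.concat hb.symm, h1⟩ ⟨p'.concat hc.symm, h2⟩)
  have h' := congrArg SimpleGraph.Walk.penultimate h
  simpa using h'

/-- An edge leaving the subtree rooted at `w` starts at `w` and ends at the parent of `w`. -/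
lemma eq_root_of_adj_descendants (hG : G.IsTree) {r w a b : V} (ha : a ∈ descendants G r w)
    (hb : b ∉ descendants G r w) (hab : G.Adj a b) :
    a = w ∧ G.dist r w = G.dist r b + 1 := by
  simp only [descendants, Set.mem_ofPred_eq] at ha hb
  have hd := hG.dist_eq_dist_add_one_of_adj r hab
  have t1 := hG.connected.dist_triangle (u := r) (v := w) (w := b)
  have t2 := hG.connected.dist_triangle (u := w) (v := a) (w := b)
  rw [SimpleGraph.dist_eq_one_iff_adj.2 hab] at t2
  have hba : G.dist r a = G.dist r b + 1 := by omega
  by_cases haw : a = w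
  · subst haw
    exact ⟨rfl, hba⟩
  · exfalso
    -- The neighbour `c` of `a` towards `w` lies in the subtree and is a parent of `a`, so `c = b`.
    obtain ⟨c, hac, hc⟩ := exists_adj_dist_succ hG.connected haw
    rw [G.dist_comm, G.dist_comm (u := c)] at hc
    have t3 := hG.connected.dist_triangle (u := r) (v := w) (w := c)
    have hd' := hG.dist_eq_dist_add_one_of_adj r hac
    have hca : G.dist r a = G.dist r c + 1 := by omega
    have := parent_unique hG hab hac hba hca
    subst this
    omega

lemma exists_child_of_mem_descendants (hG : G.IsTree) {r v x : V}
    (hx : x ∈ descendants G r v) (hxv : x ≠ v) :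
    ∃ w, IsChild G r v w ∧ x ∈ descendants G r w := by
  obtain ⟨c, hvc, hc⟩ := exists_adj_dist_succ hG.connected hxv.symm
  simp only [descendants, Set.mem_ofPred_eq] at hx
  have t := hG.connected.dist_triangle (u := r) (v := c) (w := x)
  have hd := hG.dist_eq_dist_add_one_of_adj r hvc
  refine ⟨c, ⟨hvc, by omega⟩, ?_⟩
  simp only [descendants, Set.mem_ofPred_eq]
  omega

lemma ConnOn.exists_boundary {X S : Set V} (hX : ConnOn G X) {x y : V}
    (hx : x ∈ X) (hy : y ∈ X) (hxS : x ∈ S) (hyS : y ∉ S) :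
    ∃ a b, a ∈ X ∧ b ∈ X ∧ a ∈ S ∧ b ∉ S ∧ G.Adj a b := by
  obtain ⟨p⟩ := hX.preconnected ⟨x, hx⟩ ⟨y, hy⟩
  obtain ⟨d, -, h1, h2⟩ := p.exists_boundary_dart (Subtype.val ⁻¹' S) hxS hyS
  exact ⟨d.fst, d.snd, d.fst.2, d.snd.2, h1, h2, d.adj⟩

/-- A connected set avoiding `v` and meeting the subtree of a child `w` of `v` stays inside it. -/
lemma ConnOn.subset_descendants (hG : G.IsTree) {r v w x : V} {X : Set V} (hX : ConnOn G X)
    (hvX : v ∉ X) (hw : IsChild G r v w) (hx : x ∈ X) (hxw : x ∈ descendants G r w) :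
    X ⊆ descendants G r w := by
  intro y hy
  by_contra hyw
  obtain ⟨a, b, -, hbX, ha, hb, hab⟩ := hX.exists_boundary hx hy hxw hyw
  obtain ⟨rfl, hd⟩ := eq_root_of_adj_descendants hG ha hb hab
  exact hvX (parent_unique hG hab hw.1.symm hd hw.2 ▸ hbX)

/-- If all edges from `S` to the rest of `X` end at the single vertex `p`, deleting `S` keeps `X`
connected: collapsing `S` to `p` turns walks in `X` into walks in `X ∖ S`. -/
lemma ConnOn.diff_of_unique_boundary {X S : Set V} (hX : ConnOn G X) {p : V} (hp : p ∈ X \ S)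
    (h : ∀ a b, a ∈ S → b ∈ X \ S → G.Adj a b → b = p) : ConnOn G (X \ S) := by
  classical
  let f : X → ↥(X \ S) := fun x => if hx : x.1 ∈ S then ⟨p, hp⟩ else ⟨x.1, x.2, hx⟩
  have hf : ∀ x y : X, (G.induce X).Reachable x y → (G.induce (X \ S)).Reachable (f x) (f y) := by
    rintro x y ⟨w⟩
    induction w with
    | nil => exact .rfl
    | @cons a b c hab w ih =>
      refine SimpleGraph.Reachable.trans ?_ ih
      have hab' : G.Adj a.1 b.1 := hab
      by_cases ha : a.1 ∈ S <;> by_cases hb : b.1 ∈ S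
      · simp [f, ha, hb]
      · have := h _ _ ha ⟨b.2, hb⟩ hab'
        simp [f, ha, this, hp.2]
      · have := h _ _ hb ⟨a.2, ha⟩ hab'.symm
        simp [f, hb, this, hp.2]
      · simp only [f, ha, hb, dif_neg, not_false_eq_true]
        exact SimpleGraph.Adj.reachable hab'
  have : Nonempty ↥(X \ S) := ⟨⟨p, hp⟩⟩
  refine SimpleGraph.Connected.mk fun x y => ?_
  have := hf ⟨x.1, x.2.1⟩ ⟨y.1, y.2.1⟩ (hX.preconnected _ _)
  have hx := x.2.2
  have hy := y.2.2
  simpa [f, hx, hy] using this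

lemma connOn_diff_descendants (hG : G.IsTree) (r v : V) {X : Set V} (hX : ConnOn G X)
    (hne : (X \ descendants G r v).Nonempty) : ConnOn G (X \ descendants G r v) := by
  by_cases hmeet : ∃ x ∈ X, x ∈ descendants G r v
  · obtain ⟨x, hxX, hx⟩ := hmeet
    obtain ⟨y, hyX, hy⟩ := hne
    obtain ⟨a, b, -, hbX, ha, hb, hab⟩ := hX.exists_boundary hxX hyX hx hy
    refine hX.diff_of_unique_boundary ⟨hbX, hb⟩ fun a' b' ha' hb' hab' => ?_
    obtain ⟨rfl, hd⟩ := eq_root_of_adj_descendants hG ha hb hab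
    obtain ⟨rfl, hd'⟩ := eq_root_of_adj_descendants hG ha' hb'.2 hab'
    exact parent_unique hG hab' hab hd' hd
  · have : X \ descendants G r v = X := by
      ext x
      simp only [Set.mem_sdiff, and_iff_left_iff_imp]
      exact fun hx hx' => hmeet ⟨x, hx, hx'⟩
    rwa [this]

lemma setVal_mono [Fintype V] {u : V → ℚ} (hnn : ∀ x, 0 ≤ u x) {X Y : Set V} (h : X ⊆ Y) :
    setVal u X ≤ setVal u Y := by
  classical
  unfold setVal
  rw [finsum_mem_eq_finite_toFinset_sum _ X.toFinite, finsum_mem_eq_finite_toFinset_sum _ Y.toFinite]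
  exact Finset.sum_le_sum_of_subset_of_nonneg (by simpa using h) fun x _ _ => hnn x

end Helpers

/-- If every child subtree of `v` has `u`-value less than `q`, and the vertex set of the
tree admits a partition into `k ≥ 2` nonempty connected parts each of `u`-value at least
`q`, then `V ∖ D(v)` admits such a partition into `k - 1` parts. -/
theorem partition_after_removing_subtree {V : Type*} [Fintype V]
    (G : SimpleGraph V) (hG : G.IsTree) (r : V)
    (u : V → ℚ) (hnn : ∀ x, 0 ≤ u x) (q : ℚ) (v : V)
    (hv : ∀ w, IsChild G r v w → setVal u (descendants G r w) < q)
    (k : ℕ) (hk : 2 ≤ k)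
    (P : Fin k → Set V) (hP : IsConnPartition G P)
    (hval : ∀ j, q ≤ setVal u (P j)) :
    ∃ Q : Fin (k - 1) → Set V,
      (∀ j, (Q j).Nonempty) ∧ (∀ j, ConnOn G (Q j)) ∧
        (∀ j l, j ≠ l → Disjoint (Q j) (Q l)) ∧
        (⋃ j, Q j) = Set.univ \ descendants G r v ∧
        ∀ j, q ≤ setVal u (Q j) := by
  classical
  obtain ⟨n, rfl⟩ : ∃ n, k = n + 1 := ⟨k - 1, by omega⟩
  obtain ⟨hne, hconn, hdisj, hcov⟩ := hP
  have hcov' : ∀ x, ∃ j, x ∈ P j := fun x => by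
    simpa using (hcov ▸ Set.mem_univ x : x ∈ ⋃ j, P j)
  obtain ⟨j₀, hj₀⟩ := hcov' v
  have hother : ∀ j, j ≠ j₀ → Disjoint (P j) (descendants G r v) := by
    intro j hj
    have hvj : v ∉ P j := fun h => Set.disjoint_left.1 (hdisj j j₀ hj) h hj₀
    rw [Set.disjoint_left]
    intro x hx hxD
    obtain ⟨w, hw, hxw⟩ :=
      exists_child_of_mem_descendants hG hxD (fun h => hvj (h ▸ hx))
    have hsub := (hconn j).subset_descendants hG hvj hw hx hxw
    exact absurd (hval j) (not_le.2 ((setVal_mono hnn hsub).trans_lt (hv w hw)))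
  set R := P j₀ \ descendants G r v with hR
  -- Some part other than `P j₀` can absorb the (possibly empty) leftover `R`.
  obtain ⟨i₀, hi₀⟩ : ∃ i₀ : Fin n, ConnOn G (P (j₀.succAbove i₀) ∪ R) := by
    let i : Fin n := ⟨0, by omega⟩
    rcases R.eq_empty_or_nonempty with hRe | hRne
    · exact ⟨i, by rw [hRe, Set.union_empty]; exact hconn _⟩
    · have hRc : ConnOn G R := connOn_diff_descendants hG r v (hconn j₀) hRne
      obtain ⟨x, hx⟩ := hRne
      have huniv : ConnOn G (Set.univ : Set V) :=
        (SimpleGraph.induceUnivIso G).connected_iff.2 hG.connected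
      have hUc := connOn_diff_descendants hG r v huniv ⟨x, trivial, hx.2⟩
      obtain ⟨y, hy⟩ := hne (j₀.succAbove i)
      have hne' := Fin.succAbove_ne j₀ i
      obtain ⟨a, b, haU, hbU, ha, hb, hab⟩ := hUc.exists_boundary (S := P j₀)
        ⟨trivial, hx.2⟩ ⟨trivial, Set.disjoint_left.1 (hother _ hne') hy⟩ hx.1
        (Set.disjoint_left.1 (hdisj _ _ hne') hy)
      obtain ⟨j, hj⟩ := hcov' b
      obtain ⟨i₁, rfl⟩ := Fin.exists_succAbove_eq (x := j) (y := j₀) (fun h => hb (h ▸ hj))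
      exact ⟨i₁, SimpleGraph.connected_induce_union (hconn _).preconnected hRc.preconnected
        hj ⟨ha, haU.2⟩ hab.symm⟩
  have hPR : ∀ i, Disjoint (P (j₀.succAbove i)) R := fun i =>
    (hdisj _ _ (Fin.succAbove_ne j₀ i)).mono_right Set.sdiff_subset
  refine ⟨fun i => P (j₀.succAbove i) ∪ (if i = i₀ then R else ∅), ?_, ?_, ?_, ?_, ?_⟩
  · exact fun i => (hne _).mono Set.subset_union_left
  · intro i
    by_cases h : i = i₀
    · subst h
      simpa using hi₀
    · simpa [h] using hconn _
  · intro i l hil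
    have h0 := hdisj _ _ (fun h => hil (Fin.succAbove_right_injective h) :
      j₀.succAbove i ≠ j₀.succAbove l)
    by_cases hi : i = i₀
    · have hl : l ≠ i₀ := fun h => hil (hi.trans h.symm)
      simp only [if_pos hi, if_neg hl, Set.union_empty]
      exact Set.disjoint_union_left.2 ⟨h0, (hPR l).symm⟩
    · by_cases hl : l = i₀
      · simp only [if_neg hi, if_pos hl, Set.union_empty]
        exact Set.disjoint_union_right.2 ⟨h0, hPR i⟩
      · simpa only [if_neg hi, if_neg hl, Set.union_empty] using h0
  · ext x
    simp only [Set.mem_iUnion, Set.mem_sdiff, Set.mem_univ, true_and]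
    constructor
    · rintro ⟨i, hx | hx⟩
      · exact Set.disjoint_left.1 (hother _ (Fin.succAbove_ne j₀ i)) hx
      · split_ifs at hx
        · exact hx.2
        · exact hx.elim
    · intro hx
      obtain ⟨j, hj⟩ := hcov' x
      by_cases hjj : j = j₀
      · subst hjj
        exact ⟨i₀, Or.inr (by rw [if_pos rfl]; exact ⟨hj, hx⟩)⟩
      · obtain ⟨i, rfl⟩ := Fin.exists_succAbove_eq hjj
        exact ⟨i, Or.inl hj⟩
  · exact fun i => (hval _).trans (setVal_mono hnn Set.subset_union_left)
end

section
/- Consider the CFD instance I = (G, N, 𝒰) where G is the cycle on vertices v_1, …, v_8 (edges {v_i, v_{i+1}} for i ∈ [7] and {v_1, v_8}), N = {1, 2, 3, 4}, players 1 and 2 share the utility u with values (1, 4, 4, 1, 3, 2, 2, 3)/20 on (v_1, …, v_8), and players 3 and 4 share the utility u' with values (4, 4, 1, 3, 2, 2, 3, 1)/20 on (v_1, …, v_8). Then I admits no maximin share allocation: there is no valid allocation π with u_i(π(i)) ≥ mms_i(I) for every player i ∈ {1, 2, 3, 4}. -/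
/-- The cycle on the eight vertices `v_1, …, v_8` (vertex `v_j` is `j - 1 : Fin 8`),
with edges `{v_j, v_{j+1}}` for `j ∈ [7]` and the edge `{v_1, v_8}`. -/
def cycle8 : SimpleGraph (Fin 8) :=
  SimpleGraph.fromRel (fun x y => (x : ℕ) + 1 = (y : ℕ) ∨ ((x : ℕ) = 7 ∧ (y : ℕ) = 0))

/-- The common utility of players 1 and 2: values `(1,4,4,1,3,2,2,3)/20` on `v_1, …, v_8`. -/
def utilA : Fin 8 → ℚ := fun v => ![1, 4, 4, 1, 3, 2, 2, 3] v / 20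

/-- The common utility of players 3 and 4: values `(4,4,1,3,2,2,3,1)/20` on `v_1, …, v_8`. -/
def utilB : Fin 8 → ℚ := fun v => ![4, 4, 1, 3, 2, 2, 3, 1] v / 20

/-- The edge `{a, a + 1}` of the cycle, indices taken modulo `8`. -/
def edgeAt (a : Fin 8) : Finset (Fin 8) := {a, a + 1}

lemma cycle8_adj_iff (x y : Fin 8) : cycle8.Adj x y ↔ y = x + 1 ∨ x = y + 1 := by
  simp only [cycle8, SimpleGraph.fromRel_adj]
  revert x y
  decide

lemma setVal_coe (u : Fin 8 → ℚ) (s : Finset (Fin 8)) : setVal u (s : Set (Fin 8)) = ∑ x ∈ s, u x :=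
  finsum_mem_coe_finset u s

lemma setVal_edgeAt (u : Fin 8 → ℚ) (a : Fin 8) :
    setVal u (edgeAt a : Set (Fin 8)) = u a + u (a + 1) := by
  rw [setVal_coe, edgeAt, Finset.sum_pair (by revert a; decide)]

lemma connOn_edgeAt (a : Fin 8) : ConnOn cycle8 (edgeAt a : Set (Fin 8)) := by
  rw [ConnOn, edgeAt, Finset.coe_pair]
  exact SimpleGraph.induce_pair_connected_of_adj ((cycle8_adj_iff _ _).2 (Or.inl rfl))

lemma isConnPartition_edgeAt (f : Fin 4 → Fin 8)
    (hd : ∀ j k, j ≠ k → Disjoint (edgeAt (f j)) (edgeAt (f k)))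
    (hc : ∀ x, ∃ j, x ∈ edgeAt (f j)) :
    IsConnPartition cycle8 (fun j => (edgeAt (f j) : Set (Fin 8))) := by
  refine ⟨fun j => ⟨f j, by simp [edgeAt]⟩, fun j => connOn_edgeAt _, fun j k h => ?_, ?_⟩
  · exact Finset.disjoint_coe.2 (hd j k h)
  · ext x
    simpa using hc x

/-- A connected two-element bundle is an edge of the cycle. -/
lemma exists_edge_of_bundle (s : Finset (Fin 8)) (hs : s.card = 2)
    (hp : PreconnOn cycle8 (s : Set (Fin 8))) : ∃ a, s = edgeAt a := by
  obtain ⟨x, y, hxy, rfl⟩ := Finset.card_eq_two.1 hs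
  -- The first step of a walk from `x` to `y` inside `{x, y}` can only go to `y`.
  have hadj : cycle8.Adj x y := by
    obtain ⟨w⟩ := hp ⟨x, by simp⟩ ⟨y, by simp⟩
    cases w with
    | nil => exact absurd rfl hxy
    | @cons _ z _ h _ =>
      obtain ⟨z, hz⟩ := z
      have h' : cycle8.Adj x z := h
      have hz' : z = x ∨ z = y := by simpa using hz
      rcases hz' with rfl | rfl
      · exact absurd h' (cycle8.loopless.irrefl _)
      · exact h'
  rcases (cycle8_adj_iff _ _).1 hadj with rfl | rfl
  · exact ⟨x, rfl⟩
  · exact ⟨y, Finset.pair_comm _ _⟩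

lemma utilA_edge_value (a : Fin 8) :
    utilA a + utilA (a + 1) = ![5, 8, 5, 4, 5, 4, 5, 4] a / 20 := by
  revert a
  decide +kernel

lemma utilB_edge_value (a : Fin 8) :
    utilB a + utilB (a + 1) = ![8, 5, 4, 5, 4, 5, 4, 5] a / 20 := by
  revert a
  decide +kernel

lemma utilA_edge (a : Fin 8) (h : 1 / 4 ≤ utilA a + utilA (a + 1)) :
    a = 0 ∨ a = 1 ∨ a = 2 ∨ a = 4 ∨ a = 6 := by
  rw [utilA_edge_value] at h
  fin_cases a <;> first | decide | (exfalso; revert h; norm_num)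

lemma utilB_edge (a : Fin 8) (h : 1 / 4 ≤ utilB a + utilB (a + 1)) :
    a = 0 ∨ a = 1 ∨ a = 3 ∨ a = 5 ∨ a = 7 := by
  rw [utilB_edge_value] at h
  fin_cases a <;> first | decide | (exfalso; revert h; norm_num)

/-- Four pairwise disjoint edges of the cycle cannot consist of two edges that `utilA` values at
`5/20` or more and two edges that `utilB` values at `5/20` or more. -/
lemma no_edge_assignment (a b c d : Fin 8)
    (ha : a = 0 ∨ a = 1 ∨ a = 2 ∨ a = 4 ∨ a = 6) (hb : b = 0 ∨ b = 1 ∨ b = 2 ∨ b = 4 ∨ b = 6)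
    (hc : c = 0 ∨ c = 1 ∨ c = 3 ∨ c = 5 ∨ c = 7) (hd : d = 0 ∨ d = 1 ∨ d = 3 ∨ d = 5 ∨ d = 7)
    (hab : Disjoint (edgeAt a) (edgeAt b)) (hac : Disjoint (edgeAt a) (edgeAt c))
    (had : Disjoint (edgeAt a) (edgeAt d)) (hbc : Disjoint (edgeAt b) (edgeAt c))
    (hbd : Disjoint (edgeAt b) (edgeAt d)) (hcd : Disjoint (edgeAt c) (edgeAt d)) : False := by
  rcases ha with rfl | rfl | rfl | rfl | rfl <;> rcases hb with rfl | rfl | rfl | rfl | rfl <;>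
    first
    | exact absurd hab (by decide)
    | (rcases hc with rfl | rfl | rfl | rfl | rfl <;>
        first
        | exact absurd hac (by decide)
        | exact absurd hbc (by decide)
        | (rcases hd with rfl | rfl | rfl | rfl | rfl <;>
            first
            | exact absurd had (by decide)
            | exact absurd hbd (by decide)
            | exact absurd hcd (by decide)))

/-- A bundle worth at least `5/20` has at least two items when every item is worth at most
`4/20`. -/
lemma two_le_card (u : Fin 8 → ℚ) (hu : ∀ x, u x ≤ 1 / 5) (s : Finset (Fin 8))
    (h : 1 / 4 ≤ setVal u (s : Set (Fin 8))) : 2 ≤ s.card := by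
  rw [setVal_coe] at h
  have h1 := Finset.sum_le_card_nsmul s u (1 / 5) (fun x _ => hu x)
  rw [nsmul_eq_mul] at h1
  by_contra hlt
  have h2 : (s.card : ℚ) ≤ 1 := by exact_mod_cast (by omega : s.card ≤ 1)
  linarith

/-- The cycle instance with four players (players 1 and 2 with utility `utilA`, players 3
and 4 with utility `utilB`) admits no maximin share allocation: there is no valid
allocation `π` with `u_i(π(i)) ≥ mms_i(I)` for every player `i` (here
`u_i(π(i)) ≥ mms_i(I)` is expressed as: for every partition of the items into 4 nonempty
connected parts, player `i` values her bundle at least as much as some part). -/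
theorem no_mms_allocation_on_cycle :
    ¬ ∃ π : Fin 4 → Set (Fin 8), ValidAlloc cycle8 π ∧
        ∀ i, ∀ P : Fin 4 → Set (Fin 8), IsConnPartition cycle8 P →
          ∃ j, setVal (![utilA, utilA, utilB, utilB] i) (P j) ≤
            setVal (![utilA, utilA, utilB, utilB] i) (π i) := by
  classical
  rintro ⟨π, ⟨hconn, hdisj⟩, hmms⟩
  obtain ⟨S, rfl⟩ : ∃ S : Fin 4 → Finset (Fin 8), π = fun i => (S i : Set (Fin 8)) :=
    ⟨fun i => (π i).toFinset, by simp⟩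
  replace hdisj : ∀ i j, i ≠ j → Disjoint (S i) (S j) :=
    fun i j h => Finset.disjoint_coe.1 (hdisj i j h)
  have hA (i : Fin 4) (hi : ![utilA, utilA, utilB, utilB] i = utilA) :
      1 / 4 ≤ setVal utilA (S i : Set (Fin 8)) := by
    obtain ⟨j, hj⟩ := hmms i _ (isConnPartition_edgeAt ![0, 2, 4, 6] (by decide) (by decide))
    rw [hi, setVal_edgeAt, utilA_edge_value] at hj
    refine le_trans (le_of_eq ?_) hj
    clear hj
    revert j
    decide +kernel
  have hB (i : Fin 4) (hi : ![utilA, utilA, utilB, utilB] i = utilB) :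
      1 / 4 ≤ setVal utilB (S i : Set (Fin 8)) := by
    obtain ⟨j, hj⟩ := hmms i _ (isConnPartition_edgeAt ![1, 3, 5, 7] (by decide) (by decide))
    rw [hi, setVal_edgeAt, utilB_edge_value] at hj
    refine le_trans (le_of_eq ?_) hj
    clear hj
    revert j
    decide +kernel
  have hmaxA : ∀ x, utilA x ≤ 1 / 5 := by intro x; fin_cases x <;> norm_num [utilA]
  have hmaxB : ∀ x, utilB x ≤ 1 / 5 := by intro x; fin_cases x <;> norm_num [utilB]
  have c0 := two_le_card _ hmaxA _ (hA 0 rfl)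
  have c1 := two_le_card _ hmaxA _ (hA 1 rfl)
  have c2 := two_le_card _ hmaxB _ (hB 2 rfl)
  have c3 := two_le_card _ hmaxB _ (hB 3 rfl)
  have htot : (S 0).card + (S 1).card + (S 2).card + (S 3).card ≤ 8 := by
    have h := Finset.card_biUnion (s := Finset.univ) (t := S) (fun i _ j _ h => hdisj i j h)
    rw [Fin.sum_univ_four] at h
    rw [← h]
    exact Finset.card_le_univ _
  obtain ⟨a, ha⟩ := exists_edge_of_bundle (S 0) (by omega) (hconn 0)
  obtain ⟨b, hb⟩ := exists_edge_of_bundle (S 1) (by omega) (hconn 1)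
  obtain ⟨c, hc⟩ := exists_edge_of_bundle (S 2) (by omega) (hconn 2)
  obtain ⟨d, hd⟩ := exists_edge_of_bundle (S 3) (by omega) (hconn 3)
  have v0 := hA 0 rfl
  have v1 := hA 1 rfl
  have v2 := hB 2 rfl
  have v3 := hB 3 rfl
  rw [ha, setVal_edgeAt] at v0
  rw [hb, setVal_edgeAt] at v1
  rw [hc, setVal_edgeAt] at v2
  rw [hd, setVal_edgeAt] at v3
  refine no_edge_assignment a b c d (utilA_edge a v0) (utilA_edge b v1) (utilB_edge c v2)
    (utilB_edge d v3) ?_ ?_ ?_ ?_ ?_ ?_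
  · rw [← ha, ← hb]; exact hdisj 0 1 (by decide)
  · rw [← ha, ← hc]; exact hdisj 0 2 (by decide)
  · rw [← ha, ← hd]; exact hdisj 0 3 (by decide)
  · rw [← hb, ← hc]; exact hdisj 1 2 (by decide)
  · rw [← hb, ← hd]; exact hdisj 1 3 (by decide)
  · rw [← hc, ← hd]; exact hdisj 2 3 (by decide)
end
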